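/- arXiv:1912.07629 — 3 statements merged into one kernel-verified Lean document; each statement's English description precedes it below -/
import Mathlib

section
/- There exist absolute constants c₀ ∈ (0,1], c₁ ≥ 1 and k₀ ∈ ℕ such that for all k ≥ k₀ the following holds. Let d ≥ k, let w₁,…,w_k ∈ ℝ^d and a_t ∈ ℝ^d with w_i ≠ a_t for all i, set σ_t² := min_{i∈[k]} ‖w_i − a_t‖₂², and let i* be an index attaining this minimum. Let U ∈ ℝ^{d×k} have orthonormal columns and satisfy 1/2 ≤ ‖Uᵀ(w_i − a_t)‖₂ / ‖w_i − a_t‖₂ ≤ 1 for every i ∈ [k]. Let δ satisfy e^{−c₀√k} ≤ δ < 1, set M := ⌈e^{c₁√k}·ln(2/δ)⌉, let g₁,…,g_M be i.i.d. standard Gaussian vectors in ℝ^k, and set v_j := U g_j / ‖U g_j‖₂ for j ∈ [M]. Let σ* be a number with 0.9·σ_t ≤ σ* ≤ 1.1·σ_t, and set η := (1/2)·k^{−1/4}·σ*. Then with probability at least 1 − δ: (1) there exists at least one j ∈ [M] with ‖w_{i*} − a_t − η·v_j‖₂² ≤ (1 − 1/(5√k))·σ_t²; and (2) for all j ∈ [M]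 and all i ∈ [k], ‖w_i − a_t − η·v_j‖₂² ≥ (1 − 9/√k)·σ_t². -/
open MeasureTheory ProbabilityTheory

/-- The Euclidean norm on `ℝ^n`. -/
noncomputable def e2norm {n : ℕ} (v : Fin n → ℝ) : ℝ := Real.sqrt (∑ i, v i ^ 2)

/-- The standard Gaussian measure `N(0, I_n)` on `ℝ^n`. -/
noncomputable def stdGaussian (n : ℕ) : Measure (Fin n → ℝ) :=
  Measure.pi fun _ => gaussianReal 0 1

/-!
Write `τ = k^(-1/4)` and `v = g / ‖g‖` for a standard Gaussian `g` in `ℝ^k`. Expanding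
`‖x - η U v‖² = ‖x‖² - 2η⟪Uᵀx, v⟫ + η²` with `η ≈ τ‖x‖ / 2`, a step contracts `‖x‖²` by the factor
`1 - τ²/5` once `⟪Uᵀx, v⟫ ≥ τ‖Uᵀx‖`, and cannot contract it below `1 - 9τ²` while
`⟪Uᵀx, v⟫ ≤ 8τ‖Uᵀx‖`. Since `‖g‖` lies between `√k / 2` and `2√k` up to exponentially small
probability, the tails of the Gaussian `⟪Uᵀx, g⟫` at the levels `2k^(1/4)` and `4k^(1/4)` show that
the first event has probability at least `exp (-4√k)` and that the second fails with probability at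
most `2 exp (-8√k)`. So `exp (4√k) * log (2/δ)` samples suffice to meet the first event, and are few
enough for the second to survive a union bound over all samples and all `k` vectors.
-/

open Module Real
open NormedSpace (normalize norm_normalize)
open scoped RealInnerProductSpace

lemma gaussianReal_real_Ici_le {s : ℝ} (hs : 0 ≤ s) :
    (gaussianReal 0 1).real (Set.Ici s) ≤ exp (-s ^ 2 / 2) := by
  have hsub : HasSubgaussianMGF id 1 (gaussianReal 0 1) :=
    ⟨integrable_exp_mul_gaussianReal, fun t => by simp [mgf_id_gaussianReal]⟩
  have htail := hsub.measure_ge_le hs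
  rwa [NNReal.coe_one, mul_one] at htail

lemma exp_div_three_le_gaussianPDFReal {x t : ℝ} (hx : 0 ≤ x) (hxt : x ≤ t) :
    exp (-t ^ 2 / 2) / 3 ≤ gaussianPDFReal 0 1 x := by
  have hsqrt : √(2 * π) ≤ 3 := by
    rw [sqrt_le_left (by norm_num)]
    linarith [pi_lt_d2]
  simp only [gaussianPDFReal, NNReal.coe_one, sub_zero, mul_one]
  rw [div_eq_inv_mul]
  gcongr

lemma exp_div_three_le_gaussianReal_real_Ici {s : ℝ} (hs : 0 ≤ s) :
    exp (-(s + 1) ^ 2 / 2) / 3 ≤ (gaussianReal 0 1).real (Set.Ici s) := by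
  calc exp (-(s + 1) ^ 2 / 2) / 3
      = ∫ _ in Set.Icc s (s + 1), exp (-(s + 1) ^ 2 / 2) / 3 := by simp
    _ ≤ ∫ x in Set.Icc s (s + 1), gaussianPDFReal 0 1 x :=
        setIntegral_mono_on (integrableOn_const (by simp))
          (integrable_gaussianPDFReal 0 1).integrableOn measurableSet_Icc
          fun x hx => exp_div_three_le_gaussianPDFReal (hs.trans hx.1) hx.2
    _ = (gaussianReal 0 1).real (Set.Icc s (s + 1)) := by
        rw [measureReal_def, gaussianReal_apply_eq_integral _ one_ne_zero, ENNReal.toReal_ofReal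
          (integral_nonneg fun x => gaussianPDFReal_nonneg _ _ _)]
    _ ≤ (gaussianReal 0 1).real (Set.Ici s) := measureReal_mono Set.Icc_subset_Ici_self

lemma integral_exp_mul_sq_gaussianReal {t : ℝ} (ht : t < 1 / 2) :
    ∫ x, exp (t * x ^ 2) ∂(gaussianReal 0 1) = (√(1 - 2 * t))⁻¹ := by
  have hdensity (x : ℝ) : gaussianPDFReal 0 1 x • exp (t * x ^ 2)
      = (√(2 * π))⁻¹ * exp (-(1 / 2 - t) * x ^ 2) := by
    simp only [gaussianPDFReal, smul_eq_mul, NNReal.coe_one, sub_zero, mul_one]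
    rw [mul_assoc, ← exp_add]
    ring_nf
  simp_rw [integral_gaussianReal_eq_integral_smul one_ne_zero, hdensity]
  rw [integral_const_mul, integral_gaussian, ← sqrt_inv, ← sqrt_inv, ← sqrt_mul (by positivity)]
  congr 1
  have : 1 / 2 - t ≠ 0 := by linarith
  have : 1 - 2 * t ≠ 0 := by linarith
  field_simp

lemma norm_normalize_le_one {V : Type*} [NormedAddCommGroup V] [NormedSpace ℝ V] (v : V) :
    ‖normalize v‖ ≤ 1 := by
  rw [NormedSpace.normalize, norm_smul, norm_inv, norm_norm]
  exact inv_mul_le_one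

section Direction

variable {E : Type*} [NormedAddCommGroup E] [InnerProductSpace ℝ E] {y g : E} {s R : ℝ}

lemma real_inner_normalize_right (y g : E) : ⟪y, normalize g⟫ = ⟪y, g⟫ / ‖g‖ := by
  rw [NormedSpace.normalize, real_inner_smul_right, inv_mul_eq_div]

lemma div_mul_norm_le_inner_normalize (hs : 0 ≤ s) (hg : ‖g‖ ≤ R) (h : ‖y‖ * s ≤ ⟪y, g⟫) :
    s / R * ‖y‖ ≤ ⟪y, normalize g⟫ := by
  have hys : 0 ≤ ‖y‖ * s := by positivity
  rw [real_inner_normalize_right, div_mul_eq_mul_div, mul_comm s]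
  rcases eq_or_ne g 0 with rfl | hg₀
  · rw [inner_zero_right] at h
    simp [le_antisymm h hys]
  · exact div_le_div₀ (hys.trans h) h (norm_pos_iff.2 hg₀) hg

lemma inner_normalize_le_div_mul_norm (hR : 0 < R) (hs : 0 ≤ s) (hg : R ≤ ‖g‖)
    (h : ⟪y, g⟫ ≤ ‖y‖ * s) : ⟪y, normalize g⟫ ≤ s / R * ‖y‖ := by
  rw [real_inner_normalize_right, div_mul_eq_mul_div, mul_comm s]
  exact div_le_div₀ (by positivity) h hR hg

end Direction

section StdGaussian

variable {F : Type*} [NormedAddCommGroup F] [InnerProductSpace ℝ F] [FiniteDimensional ℝ F]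
  [MeasurableSpace F] [BorelSpace F]

lemma mgf_norm_sq_stdGaussian {t : ℝ} (ht : t < 1 / 2) :
    mgf (fun g : F => ‖g‖ ^ 2) (ProbabilityTheory.stdGaussian F) t
      = (√(1 - 2 * t))⁻¹ ^ finrank ℝ F := by
  have hnorm (x : Fin (finrank ℝ F) → ℝ) :
      ‖∑ i, x i • stdOrthonormalBasis ℝ F i‖ ^ 2 = ∑ i, x i ^ 2 := by
    simp_rw [← (stdOrthonormalBasis ℝ F).sum_sq_inner_right,
      (stdOrthonormalBasis ℝ F).orthonormal.inner_right_fintype]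
  rw [mgf, ProbabilityTheory.stdGaussian, integral_map (Measurable.aemeasurable (by fun_prop))
    (Measurable.aestronglyMeasurable (by fun_prop))]
  simp_rw [hnorm, Finset.mul_sum, exp_sum]
  rw [integral_fintype_prod_eq_pow (fun x => exp (t * x ^ 2)), Fintype.card_fin,
    integral_exp_mul_sq_gaussianReal ht]

lemma integrable_exp_mul_norm_sq_stdGaussian {t : ℝ} (ht : t < 1 / 2) :
    Integrable (fun g : F => exp (t * ‖g‖ ^ 2)) (ProbabilityTheory.stdGaussian F) := by
  have hpos : 0 < 1 - 2 * t := by linarith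
  refine .of_integral_ne_zero ?_
  rw [← mgf, mgf_norm_sq_stdGaussian ht]
  positivity

lemma stdGaussian_real_four_mul_finrank_le_norm_sq_le :
    (ProbabilityTheory.stdGaussian F).real {g | 4 * (finrank ℝ F : ℝ) ≤ ‖g‖ ^ 2}
      ≤ exp (-(finrank ℝ F : ℝ) / 2) := by
  have hbase : (√(1 - 2 * (1 / 4)))⁻¹ ≤ exp (1 / 2) := by
    rw [← sqrt_inv, exp_half]
    gcongr
    linarith [exp_one_gt_d9]
  calc (ProbabilityTheory.stdGaussian F).real {g | 4 * (finrank ℝ F : ℝ) ≤ ‖g‖ ^ 2}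
      ≤ exp (-(1 / 4) * (4 * finrank ℝ F)) * (√(1 - 2 * (1 / 4)))⁻¹ ^ finrank ℝ F := by
        rw [← mgf_norm_sq_stdGaussian (by norm_num)]
        exact measure_ge_le_exp_mul_mgf _ (by norm_num)
          (integrable_exp_mul_norm_sq_stdGaussian (by norm_num))
    _ ≤ exp (-(1 / 4) * (4 * finrank ℝ F)) * exp (1 / 2) ^ finrank ℝ F := by gcongr
    _ = exp (-(finrank ℝ F : ℝ) / 2) := by
        rw [← exp_nat_mul, ← exp_add]
        ring_nf

lemma stdGaussian_real_norm_sq_le_finrank_div_four_le :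
    (ProbabilityTheory.stdGaussian F).real {g | ‖g‖ ^ 2 ≤ finrank ℝ F / 4}
      ≤ exp (-(finrank ℝ F : ℝ) / 8) := by
  have hbase : (√(1 - 2 * (-(3 / 2))))⁻¹ ≤ exp (-(1 / 2)) := by
    rw [exp_neg, exp_half]
    gcongr
    linarith [exp_one_lt_d9]
  calc (ProbabilityTheory.stdGaussian F).real {g | ‖g‖ ^ 2 ≤ finrank ℝ F / 4}
      ≤ exp (-(-(3 / 2)) * (finrank ℝ F / 4)) * (√(1 - 2 * (-(3 / 2))))⁻¹ ^ finrank ℝ F := by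
        rw [← mgf_norm_sq_stdGaussian (by norm_num)]
        exact measure_le_le_exp_mul_mgf _ (by norm_num)
          (integrable_exp_mul_norm_sq_stdGaussian (by norm_num))
    _ ≤ exp (-(-(3 / 2)) * (finrank ℝ F / 4)) * exp (-(1 / 2)) ^ finrank ℝ F := by gcongr
    _ = exp (-(finrank ℝ F : ℝ) / 8) := by
        rw [← exp_nat_mul, ← exp_add]
        ring_nf

lemma hasLaw_inner_stdGaussian {y : F} (hy : ‖y‖ = 1) :
    HasLaw (fun g => ⟪y, g⟫) (gaussianReal 0 1) (ProbabilityTheory.stdGaussian F) where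
  map_eq := by
    have hmap := IsGaussian.map_eq_gaussianReal (μ := ProbabilityTheory.stdGaussian F) (innerSL ℝ y)
    rwa [integral_strongDual_stdGaussian, variance_dual_stdGaussian, innerSL_apply_norm, hy,
      one_pow, toNNReal_one] at hmap

lemma stdGaussian_real_norm_mul_le_inner {y : F} (hy : y ≠ 0) (s : ℝ) :
    (ProbabilityTheory.stdGaussian F).real {g | ‖y‖ * s ≤ ⟪y, g⟫}
      = (gaussianReal 0 1).real (Set.Ici s) := by
  have hset : {g : F | ‖y‖ * s ≤ ⟪y, g⟫} = {g | s ≤ ⟪normalize y, g⟫} := by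
    ext g
    rw [Set.mem_ofPred_eq, Set.mem_ofPred_eq, NormedSpace.normalize, real_inner_smul_left,
      le_inv_mul_iff₀ (norm_pos_iff.2 hy)]
  rw [hset]
  exact (hasLaw_inner_stdGaussian (norm_normalize hy)).measureReal_eq measurableSet_Ici

lemma le_stdGaussian_real_div_mul_norm_le_inner_normalize (y : F) {s : ℝ} (hs : 0 ≤ s) :
    exp (-(s + 1) ^ 2 / 2) / 3 - exp (-(finrank ℝ F : ℝ) / 2) ≤
      (ProbabilityTheory.stdGaussian F).real
        {g | s / (2 * √(finrank ℝ F)) * ‖y‖ ≤ ⟪y, normalize g⟫} := by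
  rcases eq_or_ne y 0 with rfl | hy
  · have hexp : exp (-(s + 1) ^ 2 / 2) ≤ 1 := exp_le_one_iff.2 (by nlinarith)
    simp only [norm_zero, mul_zero, inner_zero_left, le_refl, Set.ofPred_true, probReal_univ]
    linarith [exp_pos (-(finrank ℝ F : ℝ) / 2)]
  have hcover : {g | ‖y‖ * s ≤ ⟪y, g⟫} ⊆
      {g | s / (2 * √(finrank ℝ F)) * ‖y‖ ≤ ⟪y, normalize g⟫} ∪
        {g | 4 * (finrank ℝ F : ℝ) ≤ ‖g‖ ^ 2} := by
    intro g hg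
    by_cases hlong : 4 * (finrank ℝ F : ℝ) ≤ ‖g‖ ^ 2
    · exact .inr hlong
    refine .inl (div_mul_norm_le_inner_normalize hs (le_of_sq_le_sq ?_ (by positivity)) hg)
    rw [mul_pow, sq_sqrt (by positivity)]
    linarith
  have hunion := (measureReal_mono hcover (μ := ProbabilityTheory.stdGaussian F)).trans
    (measureReal_union_le _ _)
  rw [stdGaussian_real_norm_mul_le_inner hy] at hunion
  linarith [exp_div_three_le_gaussianReal_real_Ici hs,
    stdGaussian_real_four_mul_finrank_le_norm_sq_le (F := F)]

lemma stdGaussian_real_div_mul_norm_lt_inner_normalize_le (y : F) {s : ℝ} (hs : 0 ≤ s) :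
    (ProbabilityTheory.stdGaussian F).real
        {g | s / (√(finrank ℝ F) / 2) * ‖y‖ < ⟪y, normalize g⟫}
      ≤ exp (-s ^ 2 / 2) + exp (-(finrank ℝ F : ℝ) / 8) := by
  rcases eq_or_ne y 0 with rfl | hy
  · simp only [norm_zero, mul_zero, inner_zero_left, lt_irrefl, Set.ofPred_false,
      measureReal_empty]
    positivity
  have hdim : 0 < finrank ℝ F := Module.finrank_pos_iff_exists_ne_zero.2 ⟨y, hy⟩
  have hcover : {g | s / (√(finrank ℝ F) / 2) * ‖y‖ < ⟪y, normalize g⟫} ⊆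
      {g | ‖y‖ * s ≤ ⟪y, g⟫} ∪ {g | ‖g‖ ^ 2 ≤ finrank ℝ F / 4} := by
    intro g hg
    by_contra! hsmall
    simp only [Set.mem_union, Set.mem_ofPred_eq, not_or, not_le] at hsmall
    have hlong : √(finrank ℝ F) / 2 ≤ ‖g‖ := by
      refine le_of_sq_le_sq ?_ (norm_nonneg g)
      rw [div_pow, sq_sqrt (by positivity)]
      linarith
    exact hg.not_ge (inner_normalize_le_div_mul_norm (by positivity) hs hlong hsmall.1.le)
  have hunion := (measureReal_mono hcover (μ := ProbabilityTheory.stdGaussian F)).trans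
    (measureReal_union_le _ _)
  rw [stdGaussian_real_norm_mul_le_inner hy] at hunion
  linarith [gaussianReal_real_Ici_le hs,
    stdGaussian_real_norm_sq_le_finrank_div_four_le (F := F)]

lemma exp_neg_le_stdGaussian_real_inv_mul_norm_le_inner_normalize {q : ℝ} (hq : 10 ≤ q)
    (hF : q ^ 4 = finrank ℝ F) (y : F) :
    exp (-(4 * q ^ 2)) ≤
      (ProbabilityTheory.stdGaussian F).real {g | q⁻¹ * ‖y‖ ≤ ⟪y, normalize g⟫} := by
  have : 0 < q := by linarith
  have hsqrt : √(finrank ℝ F) = q ^ 2 := by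
    rw [← hF, show q ^ 4 = (q ^ 2) ^ 2 by ring, sqrt_sq (by positivity)]
  have hcap := le_stdGaussian_real_div_mul_norm_le_inner_normalize y (s := 2 * q) (by positivity)
  rw [hsqrt, show 2 * q / (2 * q ^ 2) = q⁻¹ by field_simp, ← hF] at hcap
  have hq₂ : 100 ≤ q ^ 2 := by nlinarith
  have hdim : exp (-q ^ 4 / 2) ≤ exp (-(4 * q ^ 2)) := exp_le_exp.2 (by
    nlinarith [mul_nonneg (sq_nonneg q) (sub_nonneg.2 hq₂)])
  have htail : exp (-(3 * q ^ 2)) ≤ exp (-(2 * q + 1) ^ 2 / 2) := exp_le_exp.2 (by nlinarith)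
  have hgap : 6 * exp (-(4 * q ^ 2)) ≤ exp (-(3 * q ^ 2)) := by
    rw [show -(3 * q ^ 2) = q ^ 2 + -(4 * q ^ 2) by ring, exp_add]
    gcongr
    nlinarith [add_one_le_exp (q ^ 2)]
  linarith

lemma stdGaussian_real_inv_mul_norm_lt_inner_normalize_le {q : ℝ} (hq : 8 ≤ q)
    (hF : q ^ 4 = finrank ℝ F) (y : F) :
    (ProbabilityTheory.stdGaussian F).real {g | 8 * q⁻¹ * ‖y‖ < ⟪y, normalize g⟫}
      ≤ 2 * exp (-(8 * q ^ 2)) := by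
  have : 0 < q := by linarith
  have hsqrt : √(finrank ℝ F) = q ^ 2 := by
    rw [← hF, show q ^ 4 = (q ^ 2) ^ 2 by ring, sqrt_sq (by positivity)]
  have hcap := stdGaussian_real_div_mul_norm_lt_inner_normalize_le y (s := 4 * q) (by positivity)
  rw [hsqrt, show 4 * q / (q ^ 2 / 2) = 8 * q⁻¹ by field_simp; norm_num, ← hF,
    show -(4 * q) ^ 2 / 2 = -(8 * q ^ 2) by ring] at hcap
  have hq₂ : 64 ≤ q ^ 2 := by nlinarith
  have hdim : exp (-q ^ 4 / 8) ≤ exp (-(8 * q ^ 2)) := exp_le_exp.2 (by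
    nlinarith [mul_nonneg (sq_nonneg q) (sub_nonneg.2 hq₂)])
  linarith

end StdGaussian

section Descent

variable {E : Type*} [NormedAddCommGroup E] [InnerProductSpace ℝ E] {x v : E} {σ τ ρ : ℝ}

lemma norm_sub_smul_sq_le (hv : ‖v‖ ≤ 1) (hτ : 0 ≤ τ) (h : τ / 2 * ‖x‖ ≤ ⟪x, v⟫)
    (hσ : 0.9 * ‖x‖ ≤ σ) (hσ' : σ ≤ 1.1 * ‖x‖) :
    ‖x - (1 / 2 * τ * σ) • v‖ ^ 2 ≤ (1 - τ ^ 2 / 5) * ‖x‖ ^ 2 := by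
  have hx := norm_nonneg x
  have hσ₀ : 0 ≤ σ := by linarith
  have hgain : τ * σ * (τ / 2 * ‖x‖) ≤ τ * σ * ⟪x, v⟫ := by gcongr
  have hloss : ‖(1 / 2 * τ * σ) • v‖ ^ 2 ≤ (1 / 2 * τ * σ) ^ 2 := by
    rw [norm_smul, mul_pow, norm_eq_abs, sq_abs]
    exact mul_le_of_le_one_right (sq_nonneg _) (pow_le_one₀ (norm_nonneg v) hv)
  have hscale : σ ^ 2 / 4 + ‖x‖ ^ 2 / 5 ≤ σ * ‖x‖ / 2 := by
    nlinarith [mul_nonneg (sub_nonneg.2 hσ) (sub_nonneg.2 hσ'), mul_nonneg hσ₀ hx,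
      mul_nonneg hx (sub_nonneg.2 hσ), mul_nonneg hx (sub_nonneg.2 hσ')]
  rw [norm_sub_sq_real, real_inner_smul_right]
  nlinarith [mul_le_mul_of_nonneg_left hscale (sq_nonneg τ)]

lemma le_norm_sub_smul_sq (hτ : 0 ≤ τ) (hτ' : 9 * τ ^ 2 ≤ 2) (h : ⟪x, v⟫ ≤ 8 * τ * ‖x‖)
    (hρ : 0 ≤ ρ) (hρx : ρ ≤ ‖x‖) (hσ : 0 ≤ σ) (hσρ : σ ≤ 1.1 * ρ) :
    (1 - 9 * τ ^ 2) * ρ ^ 2 ≤ ‖x - (1 / 2 * τ * σ) • v‖ ^ 2 := by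
  have hgain : τ * σ * ⟪x, v⟫ ≤ τ * σ * (8 * τ * ‖x‖) := by gcongr
  have hscale : τ ^ 2 * ‖x‖ * σ ≤ τ ^ 2 * ‖x‖ * (1.1 * ρ) := by gcongr
  have hfactor : 0 ≤ (‖x‖ - ρ) * (‖x‖ + ρ - 9 * τ ^ 2 * ρ) :=
    mul_nonneg (sub_nonneg.2 hρx) (by nlinarith)
  rw [norm_sub_sq_real, real_inner_smul_right]
  nlinarith [sq_nonneg ‖(1 / 2 * τ * σ) • v‖]

end Descent

section Isometry

variable {E F : Type*} [NormedAddCommGroup E] [InnerProductSpace ℝ E] [FiniteDimensional ℝ E]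
  [NormedAddCommGroup F] [InnerProductSpace ℝ F] [FiniteDimensional ℝ F]

lemma norm_adjoint_linearIsometry_le (U : F →ₗᵢ[ℝ] E) (x : E) :
    ‖U.toLinearMap.adjoint x‖ ≤ ‖x‖ := by
  have hcauchy := real_inner_le_norm x (U (U.toLinearMap.adjoint x))
  have hinner : ⟪x, U (U.toLinearMap.adjoint x)⟫ = ‖U.toLinearMap.adjoint x‖ ^ 2 := by
    rw [← real_inner_self_eq_norm_sq, LinearMap.adjoint_inner_left]
    rfl
  rw [hinner, U.norm_map] at hcauchy
  nlinarith [norm_nonneg x, norm_nonneg (U.toLinearMap.adjoint x)]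

lemma inner_normalize_isometry (U : F →ₗᵢ[ℝ] E) (x : E) (g : F) :
    ⟪x, normalize (U g)⟫ = ⟪U.toLinearMap.adjoint x, normalize g⟫ := by
  rw [real_inner_normalize_right, real_inner_normalize_right, U.norm_map,
    LinearMap.adjoint_inner_left]
  rfl

lemma norm_sub_smul_normalize_isometry_sq_le (U : F →ₗᵢ[ℝ] E) {x : E} {g : F} {σ τ : ℝ}
    (hτ : 0 ≤ τ) (hU : 1 / 2 * ‖x‖ ≤ ‖U.toLinearMap.adjoint x‖)
    (h : τ * ‖U.toLinearMap.adjoint x‖ ≤ ⟪U.toLinearMap.adjoint x, normalize g⟫)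
    (hσ : 0.9 * ‖x‖ ≤ σ) (hσ' : σ ≤ 1.1 * ‖x‖) :
    ‖x - (1 / 2 * τ * σ) • normalize (U g)‖ ^ 2 ≤ (1 - τ ^ 2 / 5) * ‖x‖ ^ 2 := by
  refine norm_sub_smul_sq_le (norm_normalize_le_one _) hτ ?_ hσ hσ'
  rw [inner_normalize_isometry]
  linarith [mul_le_mul_of_nonneg_left hU hτ]

lemma le_norm_sub_smul_normalize_isometry_sq (U : F →ₗᵢ[ℝ] E) {x : E} {g : F} {σ τ ρ : ℝ}
    (hτ : 0 ≤ τ) (hτ' : 9 * τ ^ 2 ≤ 2)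
    (h : ⟪U.toLinearMap.adjoint x, normalize g⟫ ≤ 8 * τ * ‖U.toLinearMap.adjoint x‖)
    (hρ : 0 ≤ ρ) (hρx : ρ ≤ ‖x‖) (hσ : 0 ≤ σ) (hσρ : σ ≤ 1.1 * ρ) :
    (1 - 9 * τ ^ 2) * ρ ^ 2 ≤ ‖x - (1 / 2 * τ * σ) • normalize (U g)‖ ^ 2 := by
  refine le_norm_sub_smul_sq hτ hτ' ?_ hρ hρx hσ hσρ
  rw [inner_normalize_isometry]
  exact h.trans (by gcongr; exact norm_adjoint_linearIsometry_le U x)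

end Isometry

section Sampling

variable {Ω S κ : Type*} [MeasurableSpace Ω] [MeasurableSpace S] [Fintype κ] {P : Measure Ω}
  {μ : Measure S} {X : κ → Ω → S} {A B : Set S}

lemma measureReal_forall_mem_eq_pow (hX : iIndepFun X P) (hlaw : ∀ j, HasLaw (X j) μ P)
    (hA : MeasurableSet A) : P.real {ω | ∀ j, X j ω ∈ A} = μ.real A ^ Fintype.card κ := by
  have hfactor (j : κ) : P.real (X j ⁻¹' A) = μ.real A := (hlaw j).measureReal_eq hA
  rw [Set.ofPred_forall]
  change P.real (⋂ j, X j ⁻¹' A) = _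
  rw [measureReal_def, hX.meas_iInter fun j => ⟨A, hA, rfl⟩, ENNReal.toReal_prod]
  simp only [← measureReal_def, hfactor, Finset.prod_const, Finset.card_univ]

lemma measureReal_exists_mem_le (hlaw : ∀ j, HasLaw (X j) μ P) (hB : MeasurableSet B) :
    P.real {ω | ∃ j, X j ω ∈ B} ≤ Fintype.card κ * μ.real B := by
  have hterm (j : κ) : P.real {ω | X j ω ∈ B} = μ.real B := (hlaw j).measureReal_eq hB
  rw [Set.ofPred_exists]
  refine (measureReal_iUnion_fintype_le _).trans_eq ?_
  simp only [hterm, Finset.sum_const, Finset.card_univ, nsmul_eq_mul]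

lemma one_sub_le_measureReal_exists_mem_and_forall_notMem (hX : iIndepFun X P)
    (hlaw : ∀ j, HasLaw (X j) μ P) (hA : MeasurableSet A) (hB : MeasurableSet B) :
    1 - (μ.real Aᶜ ^ Fintype.card κ + Fintype.card κ * μ.real B) ≤
      P.real {ω | (∃ j, X j ω ∈ A) ∧ ∀ j, X j ω ∉ B} := by
  have := hX.isProbabilityMeasure
  have hcover : (Set.univ : Set Ω) ⊆ {ω | (∃ j, X j ω ∈ A) ∧ ∀ j, X j ω ∉ B} ∪
      ({ω | ∀ j, X j ω ∈ Aᶜ} ∪ {ω | ∃ j, X j ω ∈ B}) := by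
    intro ω _
    by_contra! hω
    grind
  have hunion := (measureReal_mono hcover (μ := P)).trans (measureReal_union_le _ _)
  have hfail := measureReal_union_le (μ := P) {ω | ∀ j, X j ω ∈ Aᶜ} {ω | ∃ j, X j ω ∈ B}
  rw [probReal_univ] at hunion
  rw [measureReal_forall_mem_eq_pow hX hlaw hA.compl] at hfail
  linarith [measureReal_exists_mem_le hlaw hB]

end Sampling

lemma one_sub_pow_le_of_log_inv_le {p b : ℝ} {n : ℕ} (hp : p ≤ 1) (hb : 0 < b)
    (h : log b⁻¹ ≤ p * n) : (1 - p) ^ n ≤ b := by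
  calc (1 - p) ^ n ≤ exp (-p) ^ n := pow_le_pow_left₀ (by linarith) (one_sub_le_exp_neg p) n
    _ = exp (-(p * n)) := by rw [← exp_nat_mul]; ring_nf
    _ ≤ exp (log b) := exp_le_exp.2 (by rw [log_inv] at h; linarith)
    _ = b := exp_log hb

lemma natCeil_exp_mul_log_le {a r δ : ℝ} (ha : 0 ≤ a) (hr : 0 ≤ r) (hδ : exp (-r) ≤ δ)
    (hδ' : δ ≤ 1) : (⌈exp a * log (2 / δ)⌉₊ : ℝ) ≤ 3 * exp (a + r) := by
  have hδ₀ : 0 < δ := (exp_pos _).trans_le hδ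
  have hratio : 2 / δ ≤ 2 * exp r := by
    rw [div_le_iff₀ hδ₀, mul_assoc]
    have := mul_le_mul_of_nonneg_left hδ (exp_pos r).le
    rw [← exp_add, add_neg_cancel, exp_zero] at this
    linarith
  have hlog₀ : 0 ≤ log (2 / δ) := log_nonneg ((one_le_div hδ₀).2 (by linarith))
  have hlog : log (2 / δ) ≤ 2 * exp r := (log_le_self (by positivity)).trans hratio
  calc (⌈exp a * log (2 / δ)⌉₊ : ℝ) ≤ exp a * log (2 / δ) + 1 :=
        (Nat.ceil_lt_add_one (by positivity)).le
    _ ≤ exp a * (2 * exp r) + exp a * exp r := by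
        gcongr
        exact one_le_mul_of_one_le_of_one_le (one_le_exp ha) (one_le_exp hr)
    _ = 3 * exp (a + r) := by rw [exp_add]; ring

lemma twelve_mul_sq_le_exp_two_mul {r : ℝ} (hr : 100 ≤ r) : 12 * r ^ 2 ≤ exp (2 * r) := by
  have hcubic : (2 * r) ^ 3 / 6 ≤ exp (2 * r) :=
    pow_div_factorial_le_exp (2 * r) (by linarith) 3
  nlinarith [mul_nonneg (sq_nonneg r) (sub_nonneg.2 hr)]

lemma one_sub_exp_pow_add_mul_exp_le {r δ : ℝ} {M : ℕ} (hr : 100 ≤ r) (hδ : exp (-r) ≤ δ)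
    (hδ' : δ ≤ 1) (hM : M = ⌈exp (4 * r) * log (2 / δ)⌉₊) :
    (1 - exp (-(4 * r))) ^ M + M * (r ^ 2 * (2 * exp (-(8 * r)))) ≤ δ := by
  have hmiss : (1 - exp (-(4 * r))) ^ M ≤ δ / 2 := by
    have hδ₀ : 0 < δ := (exp_pos _).trans_le hδ
    refine one_sub_pow_le_of_log_inv_le (exp_le_one_iff.2 (by linarith)) (by positivity) ?_
    rw [inv_div, exp_neg, le_inv_mul_iff₀ (exp_pos _), hM]
    exact Nat.le_ceil _
  have hbad : M * (r ^ 2 * (2 * exp (-(8 * r)))) ≤ δ / 2 := by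
    calc M * (r ^ 2 * (2 * exp (-(8 * r))))
        ≤ 3 * exp (4 * r + r) * (r ^ 2 * (2 * exp (-(8 * r)))) := by
          rw [hM]
          gcongr
          exact natCeil_exp_mul_log_le (by linarith) (by linarith) hδ hδ'
      _ = 12 * r ^ 2 * exp (-(3 * r)) / 2 := by
          rw [show -(3 * r) = (4 * r + r) + -(8 * r) by ring, exp_add (4 * r + r)]
          ring
      _ ≤ exp (2 * r) * exp (-(3 * r)) / 2 := by
          gcongr
          exact twelve_mul_sq_le_exp_two_mul hr
      _ ≤ δ / 2 := by
          rw [← exp_add, show 2 * r + -(3 * r) = -r by ring]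
          gcongr
  linarith

lemma rpow_neg_one_div_four {x : ℝ} (hx : 0 ≤ x) : x ^ (-(1 : ℝ) / 4) = (√√x)⁻¹ := by
  rw [sqrt_eq_rpow, sqrt_eq_rpow, ← rpow_mul hx, ← rpow_neg hx]
  norm_num

section Step

variable {F Ω ι κ : Type*} [NormedAddCommGroup F] [InnerProductSpace ℝ F] [FiniteDimensional ℝ F]
  [MeasurableSpace F] [BorelSpace F] [MeasurableSpace Ω] {P : Measure Ω} [Fintype ι] [Fintype κ]

lemma measurable_inner_normalize (y : F) : Measurable fun g => ⟪y, normalize g⟫ := by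
  simp_rw [real_inner_normalize_right]
  fun_prop

lemma one_sub_le_measureReal_exists_le_inner_and_forall_inner_le {q : ℝ} (hq : 10 ≤ q)
    (hF : q ^ 4 = finrank ℝ F) {g : κ → Ω → F} (hg : iIndepFun g P)
    (hlaw : ∀ j, HasLaw (g j) (ProbabilityTheory.stdGaussian F) P) (y : ι → F) (i₀ : ι) :
    1 - ((1 - exp (-(4 * q ^ 2))) ^ Fintype.card κ +
        Fintype.card κ * (Fintype.card ι * (2 * exp (-(8 * q ^ 2))))) ≤
      P.real {ω | (∃ j, q⁻¹ * ‖y i₀‖ ≤ ⟪y i₀, normalize (g j ω)⟫) ∧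
        ∀ j i, ⟪y i, normalize (g j ω)⟫ ≤ 8 * q⁻¹ * ‖y i‖} := by
  have hgood : MeasurableSet {g | q⁻¹ * ‖y i₀‖ ≤ ⟪y i₀, normalize g⟫} :=
    measurableSet_le measurable_const (measurable_inner_normalize _)
  have hbad : MeasurableSet {g | ∃ i, 8 * q⁻¹ * ‖y i‖ < ⟪y i, normalize g⟫} := by
    rw [Set.ofPred_exists]
    exact .iUnion fun i => measurableSet_lt measurable_const (measurable_inner_normalize _)
  have hbad_le : (ProbabilityTheory.stdGaussian F).real
      {g | ∃ i, 8 * q⁻¹ * ‖y i‖ < ⟪y i, normalize g⟫}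
      ≤ Fintype.card ι * (2 * exp (-(8 * q ^ 2))) := by
    rw [Set.ofPred_exists, ← nsmul_eq_mul]
    exact (measureReal_iUnion_fintype_le _).trans (Finset.sum_le_card_nsmul _ _ _ fun i _ =>
      stdGaussian_real_inv_mul_norm_lt_inner_normalize_le (by linarith) hF (y i))
  have hsample := one_sub_le_measureReal_exists_mem_and_forall_notMem hg hlaw hgood hbad
  rw [probReal_compl_eq_one_sub hgood] at hsample
  simp only [Set.mem_ofPred_eq, not_exists, not_lt] at hsample
  refine le_trans ?_ hsample
  gcongr
  · exact sub_nonneg.2 measureReal_le_one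
  · exact exp_neg_le_stdGaussian_real_inv_mul_norm_le_inner_normalize hq hF (y i₀)

variable {E : Type*} [NormedAddCommGroup E] [InnerProductSpace ℝ E] [FiniteDimensional ℝ E]

theorem stmt6_general {k : ℕ} (hk : 10000 ≤ k) (hF : finrank ℝ F = k) (hι : Fintype.card ι ≤ k)
    {x : ι → E} {i₀ : ι} (hi₀ : ∀ i, ‖x i₀‖ ≤ ‖x i‖) (U : F →ₗᵢ[ℝ] E)
    (hU : 1 / 2 * ‖x i₀‖ ≤ ‖U.toLinearMap.adjoint (x i₀)‖) {δ : ℝ} (hδ : exp (-√k) ≤ δ)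
    (hδ' : δ ≤ 1) (hκ : Fintype.card κ = ⌈exp (4 * √k) * log (2 / δ)⌉₊) {σ : ℝ}
    (hσ : 0.9 * ‖x i₀‖ ≤ σ) (hσ' : σ ≤ 1.1 * ‖x i₀‖) {g : κ → Ω → F} (hg : iIndepFun g P)
    (hlaw : ∀ j, HasLaw (g j) (ProbabilityTheory.stdGaussian F) P) :
    ENNReal.ofReal (1 - δ) ≤ P {ω |
      (∃ j, ‖x i₀ - (1 / 2 * (k : ℝ) ^ (-(1 : ℝ) / 4) * σ) • normalize (U (g j ω))‖ ^ 2
        ≤ (1 - 1 / (5 * √k)) * ‖x i₀‖ ^ 2) ∧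
      ∀ j i, (1 - 9 / √k) * ‖x i₀‖ ^ 2
        ≤ ‖x i - (1 / 2 * (k : ℝ) ^ (-(1 : ℝ) / 4) * σ) • normalize (U (g j ω))‖ ^ 2} := by
  have := hg.isProbabilityMeasure
  have hr : 100 ≤ √k := (le_sqrt' (by norm_num)).2 (by norm_num; exact_mod_cast hk)
  have hq : 10 ≤ √√k := (le_sqrt' (by norm_num)).2 (by linarith)
  have hsq : √√(k : ℝ) ^ 2 = √k := sq_sqrt (sqrt_nonneg _)
  have hq₄ : √√(k : ℝ) ^ 4 = k := by
    rw [show √√(k : ℝ) ^ 4 = (√√(k : ℝ) ^ 2) ^ 2 by ring, hsq, sq_sqrt (Nat.cast_nonneg k)]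
  have hτ : (√√(k : ℝ))⁻¹ ^ 2 = 1 / √k := by rw [inv_pow, hsq, one_div]
  have hτ' : 9 * (√√(k : ℝ))⁻¹ ^ 2 ≤ 2 := by
    rw [hτ, mul_one_div, div_le_iff₀ (by linarith)]
    linarith
  have hfail : (1 - exp (-(4 * √k))) ^ Fintype.card κ +
      Fintype.card κ * (Fintype.card ι * (2 * exp (-(8 * √k)))) ≤ δ := by
    refine le_trans ?_ (one_sub_exp_pow_add_mul_exp_le hr hδ hδ' hκ)
    rw [sq_sqrt (by positivity)]
    gcongr
  have hprob := one_sub_le_measureReal_exists_le_inner_and_forall_inner_le hq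
    (by rw [hF, hq₄]) hg hlaw (fun i => U.toLinearMap.adjoint (x i)) i₀
  rw [hsq] at hprob
  rw [← ofReal_measureReal]
  refine ENNReal.ofReal_le_ofReal (le_trans (by linarith) (hprob.trans (measureReal_mono ?_)))
  rintro ω ⟨⟨j, hj⟩, hall⟩
  rw [Set.mem_ofPred_eq, rpow_neg_one_div_four (Nat.cast_nonneg k), mul_comm 5, ← div_div, ← hτ,
    ← mul_one_div 9, ← hτ]
  exact ⟨⟨j, norm_sub_smul_normalize_isometry_sq_le U (by positivity) hU hj hσ hσ'⟩,
    fun j i => le_norm_sub_smul_normalize_isometry_sq U (by positivity) hτ' (hall j i)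
      (norm_nonneg _) (hi₀ i) (by linarith [norm_nonneg (x i₀)]) hσ'⟩

end Step

section Coordinates

open WithLp (toLp)

variable {k d : ℕ}

lemma e2norm_eq_norm_toLp (v : Fin d → ℝ) : e2norm v = ‖toLp 2 v‖ := by
  simp only [e2norm, EuclideanSpace.norm_eq, norm_eq_abs, sq_abs]

/-- The isometry `ℝ^k → ℝ^d` with matrix `U`, for `U` with orthonormal columns. -/
noncomputable def isometryOfOrthonormalColumns (U : Matrix (Fin d) (Fin k) ℝ)
    (hU : U.transpose * U = 1) : EuclideanSpace ℝ (Fin k) →ₗᵢ[ℝ] EuclideanSpace ℝ (Fin d) :=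
  U.toEuclideanLin.isometryOfInner fun x y => by
    rw [← LinearMap.adjoint_inner_right, ← Matrix.toEuclideanLin_conjTranspose_eq_adjoint,
      Matrix.conjTranspose_eq_transpose_of_trivial]
    simp [Matrix.toLpLin_apply, hU]

lemma adjoint_isometryOfOrthonormalColumns {U : Matrix (Fin d) (Fin k) ℝ}
    (hU : U.transpose * U = 1) (v : Fin d → ℝ) :
    (isometryOfOrthonormalColumns U hU).toLinearMap.adjoint (toLp 2 v)
      = toLp 2 (U.transpose.mulVec v) := by
  change U.toEuclideanLin.adjoint (toLp 2 v) = _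
  rw [← Matrix.toEuclideanLin_conjTranspose_eq_adjoint,
    Matrix.conjTranspose_eq_transpose_of_trivial]
  rfl

lemma isometryOfOrthonormalColumns_toLp {U : Matrix (Fin d) (Fin k) ℝ}
    (hU : U.transpose * U = 1) (v : Fin k → ℝ) :
    isometryOfOrthonormalColumns U hU (toLp 2 v) = toLp 2 (U.mulVec v) :=
  rfl

instance isProbabilityMeasure_stdGaussian : IsProbabilityMeasure (_root_.stdGaussian k) := by
  unfold _root_.stdGaussian
  infer_instance

lemma hasLaw_toLp_eval_pi_stdGaussian {κ : Type*} [Fintype κ] (j : κ) :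
    HasLaw (fun g : κ → Fin k → ℝ => toLp 2 (g j))
      (ProbabilityTheory.stdGaussian (EuclideanSpace ℝ (Fin k)))
      (Measure.pi fun _ => _root_.stdGaussian k) :=
  HasLaw.comp ⟨by fun_prop, map_pi_eq_stdGaussian⟩
    (measurePreserving_eval (fun _ => _root_.stdGaussian k) j).hasLaw

lemma iIndepFun_toLp_eval_pi_stdGaussian {κ : Type*} [Fintype κ] :
    iIndepFun (fun (j : κ) (g : κ → Fin k → ℝ) => toLp 2 (g j))
      (Measure.pi fun _ => _root_.stdGaussian k) :=
  iIndepFun_pi (X := fun _ => toLp 2) (by fun_prop)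

end Coordinates

/-- Progress of moment descent per step: with `M = ⌈e^{c₁√k}·ln(2/δ)⌉` i.i.d. standard
Gaussian directions `g_j` in `ℝ^k` and `v_j = U g_j / ‖U g_j‖`, with probability at least
`1 − δ`: (1) some `j` contracts the distance to the closest regressor `w_{i*}` by a factor
`1 − 1/(5√k)`, and (2) no step contracts any `‖w_i − a_t − η v_j‖²` below `(1 − 9/√k)·σ_t²`. -/
theorem stmt6 :
    ∃ (c₀ c₁ : ℝ) (k₀ : ℕ), 0 < c₀ ∧ c₀ ≤ 1 ∧ 1 ≤ c₁ ∧ 1 ≤ k₀ ∧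
      ∀ (k d : ℕ), k₀ ≤ k → k ≤ d →
      ∀ (w : Fin k → Fin d → ℝ) (a : Fin d → ℝ), (∀ i, w i ≠ a) →
      ∀ (σt : ℝ) (istar : Fin k),
        IsLeast (Set.range fun i => e2norm (w i - a)) σt →
        e2norm (w istar - a) = σt →
      ∀ U : Matrix (Fin d) (Fin k) ℝ, U.transpose * U = 1 →
        (∀ i, 1 / 2 ≤ e2norm (U.transpose.mulVec (w i - a)) / e2norm (w i - a)) →
        (∀ i, e2norm (U.transpose.mulVec (w i - a)) / e2norm (w i - a) ≤ 1) →
      ∀ δ : ℝ, Real.exp (-c₀ * Real.sqrt k) ≤ δ → δ < 1 →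
      ∀ M : ℕ, M = ⌈Real.exp (c₁ * Real.sqrt k) * Real.log (2 / δ)⌉₊ →
      ∀ σstar : ℝ, 0.9 * σt ≤ σstar → σstar ≤ 1.1 * σt →
      ∀ η : ℝ, η = 1 / 2 * (k : ℝ) ^ (-(1 : ℝ) / 4) * σstar →
        ENNReal.ofReal (1 - δ) ≤
          (Measure.pi fun _ : Fin M => stdGaussian k)
            {g : Fin M → Fin k → ℝ |
              (∃ j, e2norm (w istar - a - η • (e2norm (U.mulVec (g j)))⁻¹ • U.mulVec (g j)) ^ 2
                  ≤ (1 - 1 / (5 * Real.sqrt k)) * σt ^ 2) ∧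
              ∀ j, ∀ i, (1 - 9 / Real.sqrt k) * σt ^ 2
                  ≤ e2norm (w i - a - η • (e2norm (U.mulVec (g j)))⁻¹ • U.mulVec (g j)) ^ 2} := by
  refine ⟨1, 4, 10000, one_pos, le_rfl, by norm_num, by norm_num, ?_⟩
  intro k d hk _ w a _ σt i₀ hleast hi₀ U hU hproj _ δ hδ hδ' M hM σ hσ hσ' η hη
  subst hi₀ hη
  have hmin (i : Fin k) : ‖WithLp.toLp 2 (w i₀ - a)‖ ≤ ‖WithLp.toLp 2 (w i - a)‖ := by
    simpa only [e2norm_eq_norm_toLp] using hleast.2 ⟨i, rfl⟩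
  simp only [e2norm_eq_norm_toLp] at hproj hσ hσ' ⊢
  have hU₀ : 1 / 2 * ‖WithLp.toLp 2 (w i₀ - a)‖
      ≤ ‖(isometryOfOrthonormalColumns U hU).toLinearMap.adjoint (WithLp.toLp 2 (w i₀ - a))‖ := by
    rw [adjoint_isometryOfOrthonormalColumns]
    exact mul_le_of_le_div₀ (norm_nonneg _) (norm_nonneg _) (hproj i₀)
  have hgeneral := stmt6_general (κ := Fin M) (x := fun i => WithLp.toLp 2 (w i - a)) hk
    finrank_euclideanSpace_fin (Fintype.card_fin k).le hmin _ hU₀ (by simpa using hδ) hδ'.le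
    (by simpa using hM) hσ hσ' iIndepFun_toLp_eval_pi_stdGaussian hasLaw_toLp_eval_pi_stdGaussian
  simpa only [isometryOfOrthonormalColumns_toLp, NormedSpace.normalize, WithLp.toLp_sub,
    WithLp.toLp_smul] using hgeneral
end

section
/- For every α₁ > 0 and α₂ > 0 there exist C > 0 and d₀ ∈ ℕ such that the following holds for all d ≥ d₀. Let w₁, w₂ ∈ ℝ^d be orthonormal vectors, let g be a standard Gaussian vector in ℝ^d, and set v := g/‖g‖₂. Then Pr[ (⟨v, w₁⟩ ≥ α₁·d^{−1/4}) and (⟨v, w₂⟩ ≤ α₂·d^{−1/2}) ] ≥ d^{−C}·Pr[⟨v, w₁⟩ ≥ α₁·d^{−1/4}]. -/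
open MeasureTheory ProbabilityTheory

/-! The reflection in the hyperplane `w₂ᗮ` preserves the Gaussian measure and `‖g‖`, fixes
`⟨g, w₁⟩` and negates `⟨g, w₂⟩`. For every point of `{⟨v, w₁⟩ ≥ a}`, the point or its mirror image
satisfies `⟨v, w₂⟩ ≤ 0`, so the constraint on `⟨v, w₂⟩` costs at most a factor `2`. -/

open WithLp (toLp)
open scoped InnerProductSpace

lemma measure_le_two_mul_measure_inter_le {α R : Type*} [MeasurableSpace α]
    [AddCommGroup R] [LinearOrder R] [IsOrderedAddMonoid R] {μ : Measure α} {ρ : α → α}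
    {A : Set α} {Y : α → R} {b : R} (hρ : MeasurePreserving ρ μ μ) (hρA : Set.MapsTo ρ A A)
    (hρY : ∀ x, Y (ρ x) = -Y x) (hb : 0 ≤ b) (hAY : NullMeasurableSet (A ∩ {x | Y x ≤ b}) μ) :
    μ A ≤ 2 * μ (A ∩ {x | Y x ≤ b}) := by
  set B := A ∩ {x | Y x ≤ b}
  have A_subset : A ⊆ B ∪ ρ ⁻¹' B := fun x hx ↦ by
    rcases le_total (Y x) b with hYb | hbY
    · exact .inl ⟨hx, hYb⟩
    · refine .inr ⟨hρA hx, ?_⟩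
      calc Y (ρ x) = -Y x := hρY x
        _ ≤ 0 := neg_nonpos.2 (hb.trans hbY)
        _ ≤ b := hb
  calc μ A ≤ μ (B ∪ ρ ⁻¹' B) := measure_mono A_subset
    _ ≤ μ B + μ (ρ ⁻¹' B) := measure_union_le _ _
    _ = 2 * μ B := by rw [hρ.measure_preimage hAY, two_mul]

lemma normalize_map_linearIsometry {V W 𝓕 : Type*} [NormedAddCommGroup V] [NormedSpace ℝ V]
    [NormedAddCommGroup W] [NormedSpace ℝ W] [FunLike 𝓕 V W] [LinearIsometryClass 𝓕 ℝ V W]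
    (f : 𝓕) (x : V) : NormedSpace.normalize (f x) = f (NormedSpace.normalize x) := by
  simp only [NormedSpace.normalize, SemilinearIsometryClass.norm_map, map_smul]

section Reflection

variable {𝕜 E : Type*} [RCLike 𝕜] [NormedAddCommGroup E] [InnerProductSpace 𝕜 E]

lemma inner_reflection_left (K : Submodule 𝕜 E) [K.HasOrthogonalProjection] (x y : E) :
    ⟪K.reflection x, y⟫_𝕜 = ⟪x, K.reflection y⟫_𝕜 := by
  rw [← K.reflection.inner_map_map, K.reflection_reflection]

lemma inner_reflection_orthogonal_singleton_self (w x : E) :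
    ⟪(𝕜 ∙ w)ᗮ.reflection x, w⟫_𝕜 = -⟪x, w⟫_𝕜 := by
  rw [inner_reflection_left, Submodule.reflection_orthogonalComplement_singleton_eq_neg,
    inner_neg_right]

lemma inner_reflection_orthogonal_singleton_of_inner_eq_zero {v w : E} (h : ⟪v, w⟫_𝕜 = 0) (x : E) :
    ⟪(𝕜 ∙ w)ᗮ.reflection x, v⟫_𝕜 = ⟪x, v⟫_𝕜 := by
  have hv : v ∈ (𝕜 ∙ w)ᗮ := Submodule.mem_orthogonal_singleton_iff_inner_left.2 h
  rw [inner_reflection_left, Submodule.reflection_mem_subspace_eq_self hv]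

end Reflection

section InnerProductSpace

variable {E : Type*} [NormedAddCommGroup E] [InnerProductSpace ℝ E]
  [MeasurableSpace E] [BorelSpace E]

lemma measurable_inner_normalize_s8 (w : E) : Measurable fun x ↦ ⟪NormedSpace.normalize x, w⟫_ℝ := by
  simp only [NormedSpace.normalize, real_inner_smul_left]
  exact measurable_norm.inv.mul (continuous_id.inner continuous_const).measurable

lemma measure_le_inner_normalize_le_two_mul {μ : Measure E} {w₁ w₂ : E} (hw : ⟪w₁, w₂⟫_ℝ = 0)
    (hμ : MeasurePreserving (ℝ ∙ w₂)ᗮ.reflection μ μ) (a : ℝ) {b : ℝ} (hb : 0 ≤ b) :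
    μ {x | a ≤ ⟪NormedSpace.normalize x, w₁⟫_ℝ} ≤
      2 * μ {x | a ≤ ⟪NormedSpace.normalize x, w₁⟫_ℝ ∧ ⟪NormedSpace.normalize x, w₂⟫_ℝ ≤ b} := by
  refine measure_le_two_mul_measure_inter_le (Y := fun x ↦ ⟪NormedSpace.normalize x, w₂⟫_ℝ) hμ
    (fun x hx ↦ ?_) (fun x ↦ ?_) hb ?_
  · rwa [Set.mem_ofPred_eq, normalize_map_linearIsometry,
      inner_reflection_orthogonal_singleton_of_inner_eq_zero hw]
  · rw [normalize_map_linearIsometry, inner_reflection_orthogonal_singleton_self]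
  · exact ((measurableSet_le measurable_const (measurable_inner_normalize_s8 w₁)).inter
      (measurableSet_le (measurable_inner_normalize_s8 w₂) measurable_const)).nullMeasurableSet

lemma measurePreserving_stdGaussian_linearIsometryEquiv {F : Type*} [NormedAddCommGroup F]
    [InnerProductSpace ℝ F] [MeasurableSpace F] [BorelSpace F] [FiniteDimensional ℝ E]
    [FiniteDimensional ℝ F] (f : E ≃ₗᵢ[ℝ] F) :
    MeasurePreserving f (ProbabilityTheory.stdGaussian E) (ProbabilityTheory.stdGaussian F) :=
  ⟨f.continuous.measurable, stdGaussian_map f⟩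

end InnerProductSpace

section Coordinates

variable {n : ℕ}

lemma measurePreserving_toLp_stdGaussian :
    MeasurePreserving (MeasurableEquiv.toLp 2 (Fin n → ℝ)) (stdGaussian n)
      (ProbabilityTheory.stdGaussian (EuclideanSpace ℝ (Fin n))) :=
  ⟨MeasurableEquiv.measurable _, map_pi_eq_stdGaussian⟩

lemma norm_toLp_eq_e2norm (g : Fin n → ℝ) : ‖toLp 2 g‖ = e2norm g := by
  simp only [EuclideanSpace.norm_eq, e2norm, Real.norm_eq_abs, sq_abs]

lemma inner_toLp_toLp_eq_sum {ι : Type*} [Fintype ι] (g w : ι → ℝ) :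
    ⟪toLp 2 g, toLp 2 w⟫_ℝ = ∑ i, g i * w i := by
  rw [EuclideanSpace.inner_toLp_toLp, star_trivial, dotProduct_comm, dotProduct]

lemma inner_normalize_toLp_eq_sum (g w : Fin n → ℝ) :
    ⟪NormedSpace.normalize (toLp 2 g), toLp 2 w⟫_ℝ = ∑ i, (e2norm g)⁻¹ * g i * w i := by
  simp only [NormedSpace.normalize, real_inner_smul_left, norm_toLp_eq_e2norm,
    inner_toLp_toLp_eq_sum, Finset.mul_sum, mul_assoc]

end Coordinates

lemma ofReal_rpow_neg_one_le_inv_two {x : ℝ} (hx : 2 ≤ x) :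
    ENNReal.ofReal (x ^ (-1 : ℝ)) ≤ 2⁻¹ := by
  rw [Real.rpow_neg_one, ENNReal.ofReal_inv_of_pos (by linarith), ENNReal.inv_le_inv]
  exact ENNReal.ofNat_le_ofReal.2 hx

theorem stmt8_general {n : ℕ} {w₁ w₂ : Fin n → ℝ} (hw : ∑ i, w₁ i * w₂ i = 0) (a : ℝ)
    {b : ℝ} (hb : 0 ≤ b) :
    2⁻¹ * stdGaussian n {g | a ≤ ∑ i, (e2norm g)⁻¹ * g i * w₁ i} ≤
      stdGaussian n {g | a ≤ (∑ i, (e2norm g)⁻¹ * g i * w₁ i) ∧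
        (∑ i, (e2norm g)⁻¹ * g i * w₂ i) ≤ b} := by
  rw [ENNReal.inv_mul_le_iff two_ne_zero ENNReal.ofNat_ne_top]
  have half := measure_le_inner_normalize_le_two_mul (by rwa [inner_toLp_toLp_eq_sum])
    (measurePreserving_stdGaussian_linearIsometryEquiv (ℝ ∙ toLp 2 w₂)ᗮ.reflection) a hb
  simpa only [← measurePreserving_toLp_stdGaussian.measure_preimage_equiv, Set.preimage_ofPred_eq,
    MeasurableEquiv.coe_toLp, inner_normalize_toLp_eq_sum] using half

/-- For orthonormal `w₁, w₂` and `v = g/‖g‖` with `g ∼ N(0, I_d)`: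
`Pr[⟨v,w₁⟩ ≥ α₁·d^(−1/4) ∧ ⟨v,w₂⟩ ≤ α₂·d^(−1/2)] ≥ d^(−C)·Pr[⟨v,w₁⟩ ≥ α₁·d^(−1/4)]`. -/
theorem stmt8 (α₁ α₂ : ℝ) (h₁ : 0 < α₁) (h₂ : 0 < α₂) :
    ∃ (C : ℝ) (d₀ : ℕ), 0 < C ∧
      ∀ d : ℕ, d₀ ≤ d →
      ∀ w₁ w₂ : Fin d → ℝ, e2norm w₁ = 1 → e2norm w₂ = 1 → (∑ i, w₁ i * w₂ i) = 0 →
        ENNReal.ofReal ((d : ℝ) ^ (-C)) *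
            stdGaussian d {g | α₁ * (d : ℝ) ^ (-(1 : ℝ) / 4) ≤ ∑ i, (e2norm g)⁻¹ * g i * w₁ i}
          ≤ stdGaussian d
              {g | α₁ * (d : ℝ) ^ (-(1 : ℝ) / 4) ≤ (∑ i, (e2norm g)⁻¹ * g i * w₁ i) ∧
                (∑ i, (e2norm g)⁻¹ * g i * w₂ i) ≤ α₂ * (d : ℝ) ^ (-(1 : ℝ) / 2)} :=
  ⟨1, 2, one_pos, fun _ hd _ _ _ _ hw ↦
    (mul_le_mul_left (ofReal_rpow_neg_one_le_inv_two (by exact_mod_cast hd)) _).trans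
      (stmt8_general hw _ (by positivity))⟩
end

section
/- Let k ≥ 1 and d ≥ 1, and let σ₁,…,σ_k, σ'₁,…,σ'_k > 0 satisfy ∑_{i=1}^k σ_i^{2ℓ} = ∑_{i=1}^k (σ'_i)^{2ℓ} for every ℓ = 1,…,k−1. Let v ∈ ℝ^d be a unit vector. Let D₁ be the distribution on ℝ^{d+1} of the pair (x, ⟨w, x⟩), where x is a standard Gaussian vector in ℝ^d and w is drawn independently and uniformly from the 2k vectors {σ₁v, −σ₁v, …, σ_kv, −σ_kv}; let D₂ be defined analogously with σ'₁,…,σ'_k in place of σ₁,…,σ_k. Then for every integer s with 0 ≤ s ≤ 2k−1 and every (x̄, y) ∈ ℝ^d × ℝ, E_{(X,Y)∼D₁}[(⟨x̄, X⟩ + y·Y)^s] = E_{(X,Y)∼D₂}[(⟨x̄, X⟩ + y·Y)^s]; that is, D₁ and D₂ agree on all moments of degree at most 2k−1. -/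
open MeasureTheory ProbabilityTheory

/-- The distribution on `ℝ^d × ℝ` of `(x, ⟨w, x⟩)` where `x ∼ N(0, I_d)` and `w` is drawn
uniformly from `{±σ₁v, …, ±σ_k v}` (encoded by an index in `Fin k × Bool`). -/
noncomputable def signedMixDist (d k : ℕ) (σ : Fin k → ℝ) (v : Fin d → ℝ) :
    Measure ((Fin d → ℝ) × ℝ) :=
  Measure.map
    (fun ω : (Fin d → ℝ) × (Fin k × Bool) =>
      (ω.1, ∑ l, (if ω.2.2 then σ ω.2.1 else -σ ω.2.1) * v l * ω.1 l))
    ((stdGaussian d).prod ((2 * (k : ENNReal))⁻¹ • Measure.count))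

/-!
Conditionally on `x`, the pair is `(x, c * ⟨v, x⟩)` with `c` uniform on the values `±σᵢ`, so the
conditional moment `E[(⟨x̄, x⟩ + y * c * ⟨v, x⟩) ^ s]` is, by the binomial theorem, a combination of
the power sums of degree at most `s` of the family `±σᵢ`. The odd power sums vanish by symmetry and
the even ones are matched up to degree `2k - 2`, so the conditional moments already agree for every
`x` as long as `s ≤ 2k - 1`.
-/

section SignedFamily

variable {ι R : Type*}

/-- The family of the values `±σ i`, each listed once with either sign: the scalars `c` for which
`c • v` is one of the vectors that `signedMixDist` draws from. The indexing by `ι × Bool` is that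
of `signedMixDist`, with `true` standing for the sign `+`. -/
def signedFamily [Neg R] (σ : ι → R) (p : ι × Bool) : R :=
  if p.2 then σ p.1 else -σ p.1

variable [Ring R] [Fintype ι]

lemma sum_signedFamily_pow_of_even {n : ℕ} (hn : Even n) (σ : ι → R) :
    ∑ p, signedFamily σ p ^ n = 2 * ∑ i, σ i ^ n := by
  simp [signedFamily, Fintype.sum_prod_type, hn.neg_pow, Finset.mul_sum, two_mul]

lemma sum_signedFamily_pow_of_odd {n : ℕ} (hn : Odd n) (σ : ι → R) :
    ∑ p, signedFamily σ p ^ n = 0 := by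
  simp [signedFamily, Fintype.sum_prod_type, hn.neg_pow]

lemma sum_signedFamily_pow_congr {κ : Type*} [Fintype κ] {σ : ι → R} {τ : κ → R} {n m : ℕ}
    (h : ∀ ℓ ≤ n, ∑ i, σ i ^ (2 * ℓ) = ∑ i, τ i ^ (2 * ℓ)) (hm : m ≤ 2 * n + 1) :
    ∑ p, signedFamily σ p ^ m = ∑ p, signedFamily τ p ^ m := by
  rcases Nat.even_or_odd m with heven | hodd
  · obtain ⟨ℓ, rfl⟩ := heven.two_dvd
    rw [sum_signedFamily_pow_of_even heven, sum_signedFamily_pow_of_even heven, h ℓ (by lia)]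
  · rw [sum_signedFamily_pow_of_odd hodd, sum_signedFamily_pow_of_odd hodd]

end SignedFamily

section PowerSums

variable {ι R : Type*} [CommSemiring R] [Fintype ι]

lemma sum_add_mul_pow (a b : R) (f : ι → R) (n : ℕ) :
    ∑ i, (a + b * f i) ^ n =
      ∑ m ∈ Finset.range (n + 1), a ^ m * b ^ (n - m) * n.choose m * ∑ i, f i ^ (n - m) := by
  simp only [add_pow, mul_pow, Finset.mul_sum]
  rw [Finset.sum_comm]
  refine Finset.sum_congr rfl fun m _ ↦ Finset.sum_congr rfl fun i _ ↦ ?_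
  ring

lemma sum_add_mul_pow_congr {κ : Type*} [Fintype κ] {f : ι → R} {g : κ → R} {n : ℕ}
    (h : ∀ m ≤ n, ∑ i, f i ^ m = ∑ i, g i ^ m) (a b : R) :
    ∑ i, (a + b * f i) ^ n = ∑ i, (a + b * g i) ^ n := by
  simp only [sum_add_mul_pow, h _ (Nat.sub_le n _)]

end PowerSums

lemma memLp_dotProduct_pi {ι : Type*} [Fintype ι] {μ : ι → Measure ℝ}
    [∀ i, IsProbabilityMeasure (μ i)] {p : ENNReal} (hμ : ∀ i, MemLp id p (μ i)) (c : ι → ℝ) :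
    MemLp (fun x ↦ c ⬝ᵥ x) p (Measure.pi μ) :=
  memLp_finsetSum _ fun i _ ↦
    ((hμ i).comp_measurePreserving (measurePreserving_eval μ i)).const_mul (c i)

lemma integrable_dotProduct_pow_stdGaussian {d : ℕ} (c : Fin d → ℝ) (n : ℕ) :
    Integrable (fun x ↦ (c ⬝ᵥ x) ^ n) (stdGaussian d) := by
  have hmem : MemLp (fun x ↦ c ⬝ᵥ x) n (Measure.pi fun _ : Fin d ↦ gaussianReal 0 1) :=
    memLp_dotProduct_pi (fun _ ↦ memLp_id_gaussianReal' _ (ENNReal.natCast_ne_top n)) c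
  refine (integrable_norm_iff (hmem.aestronglyMeasurable.pow n)).mp ?_
  simpa only [Pi.pow_apply, norm_pow] using hmem.integrable_norm_pow'

lemma prod_count_eq_sum_map {α β : Type*} [MeasurableSpace α] [MeasurableSpace β] [Fintype β]
    (μ : Measure α) [SFinite μ] :
    μ.prod (Measure.count : Measure β) = ∑ b, μ.map (fun a ↦ (a, b)) := by
  rw [Measure.count, Measure.prod_sum_right, Measure.sum_fintype]
  simp only [Measure.prod_dirac]

section SignedMixDist

variable {d k : ℕ}

lemma signedMixDist_eq_smul_sum_map (σ : Fin k → ℝ) (v : Fin d → ℝ) :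
    signedMixDist d k σ v = (2 * (k : ENNReal))⁻¹ •
      ∑ p, (stdGaussian d).map (fun x ↦ (x, signedFamily σ p * (v ⬝ᵥ x))) := by
  have : SFinite (stdGaussian d) := by unfold _root_.stdGaussian; infer_instance
  let draw (ω : (Fin d → ℝ) × (Fin k × Bool)) : (Fin d → ℝ) × ℝ :=
    (ω.1, signedFamily σ ω.2 * (v ⬝ᵥ ω.1))
  have hdraw : Measurable draw := by
    have : Measurable (signedFamily σ) := .of_discrete
    unfold draw dotProduct
    fun_prop
  have hdist : signedMixDist d k σ v =
      ((stdGaussian d).prod ((2 * (k : ENNReal))⁻¹ • Measure.count)).map draw := by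
    simp only [signedMixDist, draw, signedFamily, dotProduct, Finset.mul_sum, mul_assoc]
  rw [hdist, Measure.prod_smul_right, Measure.map_smul, prod_count_eq_sum_map,
    Measure.map_finset_sum' hdraw.aemeasurable]
  congr! 2 with p
  exact Measure.map_map hdraw measurable_prodMk_right

lemma integral_signedMixDist {E : Type*} [NormedAddCommGroup E] [NormedSpace ℝ E]
    (σ : Fin k → ℝ) (v : Fin d → ℝ) {g : (Fin d → ℝ) × ℝ → E} (hg : StronglyMeasurable g)
    (hint : ∀ p, Integrable (fun x ↦ g (x, signedFamily σ p * (v ⬝ᵥ x))) (stdGaussian d)) :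
    ∫ q, g q ∂signedMixDist d k σ v =
      (2 * (k : ℝ))⁻¹ • ∫ x, ∑ p, g (x, signedFamily σ p * (v ⬝ᵥ x)) ∂stdGaussian d := by
  have hmeas (p : Fin k × Bool) :
      Measurable (fun x : Fin d → ℝ ↦ (x, signedFamily σ p * (v ⬝ᵥ x))) := by
    unfold dotProduct
    fun_prop
  have hintMap (p : Fin k × Bool) :
      Integrable g ((stdGaussian d).map fun x ↦ (x, signedFamily σ p * (v ⬝ᵥ x))) :=
    (integrable_map_measure hg.aestronglyMeasurable (hmeas p).aemeasurable).mpr (hint p)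
  rw [signedMixDist_eq_smul_sum_map, integral_smul_measure,
    integral_finsetSum_measure fun p _ ↦ hintMap p, integral_finsetSum _ fun p _ ↦ hint p]
  simp only [integral_map (hmeas _).aemeasurable hg.aestronglyMeasurable, ENNReal.toReal_inv,
    ENNReal.toReal_mul, ENNReal.toReal_ofNat, ENNReal.toReal_natCast]

lemma integral_pow_signedMixDist (σ : Fin k → ℝ) (v u : Fin d → ℝ) (y : ℝ) (n : ℕ) :
    ∫ q, (u ⬝ᵥ q.1 + y * q.2) ^ n ∂signedMixDist d k σ v =
      (2 * (k : ℝ))⁻¹ * ∫ x, ∑ p, (u ⬝ᵥ x + y * (v ⬝ᵥ x) * signedFamily σ p) ^ n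
        ∂stdGaussian d := by
  have hg : Measurable (fun q : (Fin d → ℝ) × ℝ ↦ (u ⬝ᵥ q.1 + y * q.2) ^ n) := by
    unfold dotProduct
    fun_prop
  have hlinear (p : Fin k × Bool) (x : Fin d → ℝ) :
      u ⬝ᵥ x + y * (signedFamily σ p * (v ⬝ᵥ x)) = (u + (y * signedFamily σ p) • v) ⬝ᵥ x := by
    rw [add_dotProduct, smul_dotProduct, smul_eq_mul, mul_assoc]
  rw [integral_signedMixDist σ v hg.stronglyMeasurable, smul_eq_mul]
  · simp only [mul_assoc, mul_comm (v ⬝ᵥ _)]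
  · intro p
    simpa only [hlinear] using integrable_dotProduct_pow_stdGaussian _ n

end SignedMixDist

theorem stmt13_general {d k n s : ℕ} {σ σ' : Fin k → ℝ}
    (hmatch : ∀ ℓ, 1 ≤ ℓ → ℓ ≤ n → ∑ i, σ i ^ (2 * ℓ) = ∑ i, σ' i ^ (2 * ℓ))
    (hs : s ≤ 2 * n + 1) (v xbar : Fin d → ℝ) (y : ℝ) :
    ∫ q, (xbar ⬝ᵥ q.1 + y * q.2) ^ s ∂signedMixDist d k σ v =
      ∫ q, (xbar ⬝ᵥ q.1 + y * q.2) ^ s ∂signedMixDist d k σ' v := by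
  have heven : ∀ ℓ ≤ n, ∑ i, σ i ^ (2 * ℓ) = ∑ i, σ' i ^ (2 * ℓ) := by
    rintro (_ | ℓ) hℓ
    · simp
    · exact hmatch (ℓ + 1) ℓ.succ_pos hℓ
  have hsigned : ∀ m ≤ s, ∑ p, signedFamily σ p ^ m = ∑ p, signedFamily σ' p ^ m :=
    fun m hm ↦ sum_signedFamily_pow_congr heven (hm.trans hs)
  simp only [integral_pow_signedMixDist, sum_add_mul_pow_congr hsigned]

/-- If the power sums `∑ σᵢ^(2ℓ)` and `∑ (σ'ᵢ)^(2ℓ)` match for `1 ≤ ℓ ≤ k−1`, then the two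
distributions of `(x, ⟨w, x⟩)` (with `w` uniform on `{±σᵢv}` resp. `{±σ'ᵢv}`) agree on all
moments of degree at most `2k−1`: for every direction `(x̄, y)`,
`E[(⟨x̄,X⟩ + y·Y)^s]` coincides for `s ≤ 2k−1`. -/
theorem stmt13 (k d : ℕ) (hk : 1 ≤ k) (hd : 1 ≤ d)
    (σ σ' : Fin k → ℝ) (hσ : ∀ i, 0 < σ i) (hσ' : ∀ i, 0 < σ' i)
    (hmatch : ∀ ℓ : ℕ, 1 ≤ ℓ → ℓ ≤ k - 1 → (∑ i, σ i ^ (2 * ℓ)) = ∑ i, σ' i ^ (2 * ℓ))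
    (v : Fin d → ℝ) (hv : e2norm v = 1) :
    ∀ s : ℕ, s ≤ 2 * k - 1 → ∀ (xbar : Fin d → ℝ) (y : ℝ),
      (∫ q : (Fin d → ℝ) × ℝ, ((∑ l, xbar l * q.1 l) + y * q.2) ^ s
          ∂signedMixDist d k σ v)
        = ∫ q : (Fin d → ℝ) × ℝ, ((∑ l, xbar l * q.1 l) + y * q.2) ^ s
          ∂signedMixDist d k σ' v := by
  intro s hs xbar y
  exact stmt13_general hmatch (by lia) v xbar y
end
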